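/- arXiv:1105.5127 — 4 statements merged into one kernel-verified Lean document; each statement's English description precedes it below -/
import Mathlib

section
/- For every ε > 0 there is a constant C_ε such that for every nonzero integer b and every real X ≥ 2 with |b| ≤ X, the number of triples (a, c, d) ∈ ℤ³ with |a| ≤ X, |c| ≤ X, |d| ≤ X satisfying Descartes' equation 2(a²+b²+c²+d²) = (a+b+c+d)² is at most C_ε · X^{1+ε}. -/
theorem divisor_bound_aux (δ : ℝ) (hδ : 0 < δ) :
    ∃ C : ℝ, 0 < C ∧ ∀ n : ℕ, n ≠ 0 → (n.divisors.card : ℝ) ≤ C * (n : ℝ) ^ δ := by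
  obtain ⟨P, hP⟩ := exists_nat_ge ((2 : ℝ) ^ (1 / δ))
  have hl : 0 < Real.log 2 := Real.log_pos (by norm_num)
  set K : ℝ := 1 + 1 / (δ * Real.log 2) with hK
  have hK1 : 1 ≤ K := by
    have : 0 < 1 / (δ * Real.log 2) := by positivity
    linarith
  have hK2 : 1 ≤ K * (δ * Real.log 2) := by
    rw [hK, add_mul, one_div, inv_mul_cancel₀ (by positivity)]
    have : 0 < δ * Real.log 2 := by positivity
    linarith
  refine ⟨K ^ P, by positivity, fun n hn => ?_⟩
  have hn' : (n : ℝ) ^ δ = ∏ p ∈ n.primeFactors, ((p : ℝ) ^ (n.factorization p)) ^ δ := by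
    rw [Real.finset_prod_rpow _ _ (fun i _ => by positivity)]
    congr 1
    conv_lhs => rw [← Nat.prod_factorization_pow_eq_self hn]
    simp [Finsupp.prod]
  have key : ∀ p ∈ n.primeFactors, ((n.factorization p : ℝ) + 1) ≤
      (if p < P then K else 1) * ((p : ℝ) ^ (n.factorization p)) ^ δ := by
    intro p hp
    have hp2 : (2 : ℝ) ≤ p := by exact_mod_cast (Nat.prime_of_mem_primeFactors hp).two_le
    generalize n.factorization p = k
    split_ifs with h
    · have h1 : ((2 : ℝ) ^ k) ^ δ ≤ ((p : ℝ) ^ k) ^ δ := by gcongr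
      have h2 : 1 + k * (δ * Real.log 2) ≤ ((2 : ℝ) ^ k) ^ δ := by
        rw [Real.rpow_def_of_pos (by positivity), Real.log_pow]
        have := Real.add_one_le_exp (k * Real.log 2 * δ)
        linarith
      calc (k : ℝ) + 1 ≤ K * (1 + k * (δ * Real.log 2)) := by
            have : (k : ℝ) * 1 ≤ k * (K * (δ * Real.log 2)) := by gcongr
            linarith
        _ ≤ K * ((p : ℝ) ^ k) ^ δ := by gcongr; linarith
    · have h3 : (2 : ℝ) ≤ (p : ℝ) ^ δ := by
        have h4 : (2 : ℝ) ^ (1 / δ) ≤ p := hP.trans (by exact_mod_cast not_lt.mp h)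
        calc (2 : ℝ) = ((2 : ℝ) ^ (1 / δ)) ^ δ := by
              rw [← Real.rpow_mul (by norm_num), one_div, inv_mul_cancel₀ hδ.ne', Real.rpow_one]
          _ ≤ _ := by gcongr
      have h5 : ((p : ℝ) ^ k) ^ δ = ((p : ℝ) ^ δ) ^ k := by
        rw [← Real.rpow_natCast, ← Real.rpow_natCast, ← Real.rpow_mul (by positivity),
          ← Real.rpow_mul (by positivity), mul_comm]
      rw [one_mul, h5]
      have h6 : k + 1 ≤ 2 ^ k := Nat.lt_two_pow_self
      calc (k : ℝ) + 1 ≤ 2 ^ k := by exact_mod_cast h6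
        _ ≤ _ := by gcongr
  rw [Nat.card_divisors hn, hn']
  push_cast
  refine (Finset.prod_le_prod (fun i _ => by positivity) key).trans ?_
  rw [Finset.prod_mul_distrib]
  refine mul_le_mul_of_nonneg_right ?_ (Finset.prod_nonneg fun i _ => by positivity)
  rw [← Finset.prod_filter, Finset.prod_const]
  refine pow_le_pow_right₀ hK1 ?_
  calc _ ≤ (Finset.range P).card := Finset.card_le_card (by
        intro x hx
        simp only [Finset.mem_filter, Finset.mem_range] at hx ⊢
        exact hx.2)
    _ = P := Finset.card_range P

/-- For fixed nonzero `b`, the number of integer triples `(a,c,d)` with all entries of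
absolute value at most `X` satisfying Descartes' equation is `O_ε(X^{1+ε})`. -/
theorem descartes_fiber_count (ε : ℝ) (hε : 0 < ε) :
    ∃ Cε : ℝ, ∀ b : ℤ, b ≠ 0 → ∀ X : ℝ, 2 ≤ X → |(b : ℝ)| ≤ X →
      (({t : ℤ × ℤ × ℤ | |(t.1 : ℝ)| ≤ X ∧ |(t.2.1 : ℝ)| ≤ X ∧ |(t.2.2 : ℝ)| ≤ X ∧
          2 * (t.1 ^ 2 + b ^ 2 + t.2.1 ^ 2 + t.2.2 ^ 2) =
            (t.1 + b + t.2.1 + t.2.2) ^ 2}.ncard : ℝ)) ≤ Cε * X ^ (1 + ε) := by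
  obtain ⟨C, hC, hdiv⟩ := divisor_bound_aux (ε / 2) (by positivity)
  refine ⟨10 * C * 5 ^ (ε / 2), fun b hb X hX hbX => ?_⟩
  set M : ℕ := ⌊2 * X⌋₊ with hM
  have hMX : (M : ℝ) ≤ 2 * X := Nat.floor_le (by linarith)
  let D : ℤ → Finset ℤ := fun m =>
    ((b ^ 2 + m ^ 2).natAbs.divisors.image (fun k : ℕ => (k : ℤ))) ∪
    ((b ^ 2 + m ^ 2).natAbs.divisors.image (fun k : ℕ => -(k : ℤ)))
  let I : Finset ℤ := Finset.Icc (-(M : ℤ)) M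
  let S : Finset (Σ _ : ℤ, ℤ) := I.sigma D
  have hNpos : ∀ m : ℤ, b ^ 2 + m ^ 2 ≠ 0 := fun m => by positivity
  set T := {t : ℤ × ℤ × ℤ | |(t.1 : ℝ)| ≤ X ∧ |(t.2.1 : ℝ)| ≤ X ∧ |(t.2.2 : ℝ)| ≤ X ∧
          2 * (t.1 ^ 2 + b ^ 2 + t.2.1 ^ 2 + t.2.2 ^ 2) =
            (t.1 + b + t.2.1 + t.2.2) ^ 2} with hT
  let f : ℤ × ℤ × ℤ → (Σ _ : ℤ, ℤ) := fun t => ⟨(t.2.2 - t.1 - b - t.2.1) / 2, t.1 + b⟩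
  have param : ∀ t ∈ T, ∃ m : ℤ, t.2.2 - t.1 - b - t.2.1 = 2 * m ∧
      (t.1 + b) * (t.2.1 + b) = b ^ 2 + m ^ 2 := by
    rintro ⟨a, c, d⟩ ⟨-, -, -, h⟩
    simp only at h ⊢
    have h1 : (d - a - b - c) ^ 2 = 2 * (2 * ((a + b) * (c + b) - b ^ 2)) := by linarith
    have h2 : (2 : ℤ) ∣ d - a - b - c := Int.prime_two.dvd_of_dvd_pow ⟨_, h1⟩
    obtain ⟨m, hm⟩ := h2
    refine ⟨m, hm, ?_⟩
    rw [hm] at h1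
    linarith
  have hmaps : ∀ t ∈ T, f t ∈ (S : Set (Σ _ : ℤ, ℤ)) := by
    intro t ht
    obtain ⟨m, hm, hm2⟩ := param t ht
    obtain ⟨h1, h2, h3, -⟩ := ht
    have hf : f t = ⟨m, t.1 + b⟩ := by
      simp only [f, hm]
      congr 1
      omega
    rw [hf, Finset.mem_coe, Finset.mem_sigma]
    refine ⟨?_, ?_⟩
    · have hmr : (t.2.2 : ℝ) - t.1 - b - t.2.1 = 2 * m := by exact_mod_cast hm
      rw [abs_le] at h1 h2 h3 hbX
      have hm3 : |(m : ℝ)| ≤ 2 * X := by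
        rw [abs_le]; constructor <;> linarith
      have hm4 : m.natAbs ≤ M := by
        apply Nat.le_floor
        rw [Nat.cast_natAbs]; push_cast; exact hm3
      simp only [I, Finset.mem_Icc]
      omega
    · have hd : (t.1 + b).natAbs ∈ (b ^ 2 + m ^ 2).natAbs.divisors := by
        rw [Nat.mem_divisors]
        exact ⟨Int.natAbs_dvd_natAbs.mpr ⟨_, hm2.symm⟩, Int.natAbs_ne_zero.mpr (hNpos m)⟩
      simp only [D, Finset.mem_union, Finset.mem_image]
      rcases Int.natAbs_eq (t.1 + b) with h | h
      · exact Or.inl ⟨_, hd, h.symm⟩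
      · exact Or.inr ⟨_, hd, h.symm⟩
  have hinj : Set.InjOn f T := by
    intro t ht s hs hts
    obtain ⟨m, hm, hm2⟩ := param t ht
    obtain ⟨m', hm', hm2'⟩ := param s hs
    simp only [f, Sigma.mk.injEq, heq_eq_eq] at hts
    obtain ⟨e1, e2⟩ := hts
    have e3 : m = m' := by omega
    subst e3
    have hne : t.1 + b ≠ 0 := by
      intro h0
      rw [h0, zero_mul] at hm2
      exact hNpos m hm2.symm
    have e4 : t.2.1 + b = s.2.1 + b := by
      apply mul_left_cancel₀ hne
      rw [hm2, e2, hm2']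
    ext
    · omega
    · omega
    · omega
  have hcard : T.ncard ≤ S.card := by
    rw [← Set.ncard_coe_finset S]
    exact Set.ncard_le_ncard_of_injOn f hmaps hinj (Finset.finite_toSet S)
  have hX0 : 0 < X := by linarith
  have hD : ∀ m ∈ I, ((D m).card : ℝ) ≤ 2 * (C * (5 ^ (ε / 2) * X ^ ε)) := by
    intro m hm
    have h1 : (D m).card ≤ 2 * (b ^ 2 + m ^ 2).natAbs.divisors.card := by
      refine (Finset.card_union_le _ _).trans ?_
      rw [two_mul]
      exact add_le_add Finset.card_image_le Finset.card_image_le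
    have h2 := hdiv (b ^ 2 + m ^ 2).natAbs (Int.natAbs_ne_zero.mpr (hNpos m))
    have h3 : (((b ^ 2 + m ^ 2).natAbs : ℕ) : ℝ) ≤ 5 * X ^ 2 := by
      rw [Nat.cast_natAbs, abs_of_nonneg (by positivity)]
      push_cast
      simp only [I, Finset.mem_Icc] at hm
      have hl : (-(M : ℝ)) ≤ m := by exact_mod_cast hm.1
      have hr : (m : ℝ) ≤ M := by exact_mod_cast hm.2
      have := sq_le_sq' (a := (m : ℝ)) (b := 2 * X) (by linarith) (by linarith)
      have := sq_le_sq' (abs_le.mp hbX).1 (abs_le.mp hbX).2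
      nlinarith
    have h4 : ((5 : ℝ) * X ^ 2) ^ (ε / 2) = 5 ^ (ε / 2) * X ^ ε := by
      rw [Real.mul_rpow (by norm_num) (by positivity), ← Real.rpow_natCast,
        ← Real.rpow_mul hX0.le]
      congr 2
      push_cast
      ring
    calc ((D m).card : ℝ) ≤ 2 * ((b ^ 2 + m ^ 2).natAbs.divisors.card : ℝ) := by exact_mod_cast h1
      _ ≤ 2 * (C * (((b ^ 2 + m ^ 2).natAbs : ℕ) : ℝ) ^ (ε / 2)) := by gcongr
      _ ≤ 2 * (C * ((5 : ℝ) * X ^ 2) ^ (ε / 2)) := by gcongr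
      _ = _ := by rw [h4]
  have hI : (I.card : ℝ) ≤ 5 * X := by
    have : I.card = 2 * M + 1 := by
      simp only [I, Int.card_Icc]; omega
    rw [this]; push_cast; linarith
  calc (T.ncard : ℝ) ≤ S.card := by exact_mod_cast hcard
    _ = ∑ m ∈ I, ((D m).card : ℝ) := by rw [Finset.card_sigma]; push_cast; rfl
    _ ≤ I.card • (2 * (C * (5 ^ (ε / 2) * X ^ ε))) := Finset.sum_le_card_nsmul _ _ _ hD
    _ ≤ (5 * X) * (2 * (C * (5 ^ (ε / 2) * X ^ ε))) := by
        rw [nsmul_eq_mul]; gcongr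
    _ = _ := by rw [Real.rpow_add hX0, Real.rpow_one]; ring
end

section
/- Let K ≥ 1 and R ≥ 1 be real numbers. Let f(x,y) = A x² + 2B x y + C y² and f₁(x,y) = A₁ x² + 2B₁ x y + C₁ y² be integral binary quadratic forms with A, C, A₁, C₁ > 0 and AC − B² = A₁C₁ − B₁² = a² for some nonzero integer a with a² ≥ R²/K, and suppose R/K ≤ A, C, A₁, C₁ ≤ K R. If there is a matrix (α β; γ δ) ∈ SL₂(ℤ) with f₁(x,y) = f(αx + βy, γx + δy) for all x, y (equivalently A₁ = Aα² + 2Bαγ + Cγ², B₁ = Aαβ + B(αδ+βγ) + Cγδ, C₁ = Aβ² + 2Bβδ + Cδ²), then max(|α|, |β|, |γ|, |δ|) ≤ 2K³. -/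
theorem aux_bound (K R : ℝ) (hK : 1 ≤ K) (hR : 1 ≤ R) (P Q a t : ℤ) (hP : 0 < P) (hQ : 0 < Q)
    (ha2 : R ^ 2 / K ≤ (a : ℝ) ^ 2) (hPb : (P : ℝ) ≤ K * R) (hQb : (Q : ℝ) ≤ K * R)
    (h : a ^ 2 * t ^ 2 ≤ P * Q) : |(t : ℝ)| ≤ 2 * K ^ 3 := by
  have hK0 : 0 < K := by linarith
  have hR2 : 0 < R ^ 2 := by positivity
  have h' : (a : ℝ) ^ 2 * (t : ℝ) ^ 2 ≤ P * Q := by exact_mod_cast h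
  have hP' : (0 : ℝ) < P := by exact_mod_cast hP
  have hQ' : (0 : ℝ) < Q := by exact_mod_cast hQ
  have e1 : (P : ℝ) * Q ≤ (K * R) * (K * R) := mul_le_mul hPb hQb hQ'.le (by positivity)
  have e2 : R ^ 2 / K * (t : ℝ) ^ 2 ≤ (a : ℝ) ^ 2 * (t : ℝ) ^ 2 :=
    mul_le_mul_of_nonneg_right ha2 (sq_nonneg _)
  have e3 : R ^ 2 / K * (t : ℝ) ^ 2 ≤ R ^ 2 / K * K ^ 3 := by
    have : R ^ 2 / K * K ^ 3 = (K * R) * (K * R) := by field_simp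
    linarith
  have e4 : (t : ℝ) ^ 2 ≤ K ^ 3 := le_of_mul_le_mul_left e3 (by positivity)
  have e5 : (1 : ℝ) ≤ K ^ 3 := one_le_pow₀ hK
  apply abs_le_of_sq_le_sq _ (by positivity)
  nlinarith

/-- Two equivalent binary quadratic forms of the given shape (coefficients of size about `R`,
discriminant `−4a²` with `a² ≳ R²`) can only be related by a substitution with entries `O(1)`. -/
theorem equivalent_forms_bounded_substitution
    (K R : ℝ) (hK : 1 ≤ K) (hR : 1 ≤ R)
    (A B C A₁ B₁ C₁ a : ℤ)
    (hA : 0 < A) (hC : 0 < C) (hA₁ : 0 < A₁) (hC₁ : 0 < C₁) (ha : a ≠ 0)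
    (hdisc : A * C - B ^ 2 = a ^ 2) (hdisc₁ : A₁ * C₁ - B₁ ^ 2 = a ^ 2)
    (ha2 : R ^ 2 / K ≤ (a : ℝ) ^ 2)
    (hAb : R / K ≤ (A : ℝ) ∧ (A : ℝ) ≤ K * R)
    (hCb : R / K ≤ (C : ℝ) ∧ (C : ℝ) ≤ K * R)
    (hA₁b : R / K ≤ (A₁ : ℝ) ∧ (A₁ : ℝ) ≤ K * R)
    (hC₁b : R / K ≤ (C₁ : ℝ) ∧ (C₁ : ℝ) ≤ K * R)
    (α β γ δ : ℤ) (hdet : α * δ - β * γ = 1)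
    (h1 : A₁ = A * α ^ 2 + 2 * B * α * γ + C * γ ^ 2)
    (h2 : B₁ = A * α * β + B * (α * δ + β * γ) + C * γ * δ)
    (h3 : C₁ = A * β ^ 2 + 2 * B * β * δ + C * δ ^ 2) :
    max (max |(α : ℝ)| |(β : ℝ)|) (max |(γ : ℝ)| |(δ : ℝ)|) ≤ 2 * K ^ 3 := by
  have k1 : a ^ 2 * γ ^ 2 ≤ A * A₁ := by
    rw [h1, ← hdisc]; nlinarith [sq_nonneg (A * α + B * γ)]
  have k2 : a ^ 2 * α ^ 2 ≤ C * A₁ := by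
    rw [h1, ← hdisc]; nlinarith [sq_nonneg (C * γ + B * α)]
  have k3 : a ^ 2 * δ ^ 2 ≤ A * C₁ := by
    rw [h3, ← hdisc]; nlinarith [sq_nonneg (A * β + B * δ)]
  have k4 : a ^ 2 * β ^ 2 ≤ C * C₁ := by
    rw [h3, ← hdisc]; nlinarith [sq_nonneg (C * δ + B * β)]
  exact max_le
    (max_le (aux_bound K R hK hR C A₁ a α hC hA₁ ha2 hCb.2 hA₁b.2 k2)
      (aux_bound K R hK hR C C₁ a β hC hC₁ ha2 hCb.2 hC₁b.2 k4))
    (max_le (aux_bound K R hK hR A A₁ a γ hA hA₁ ha2 hAb.2 hA₁b.2 k1)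
      (aux_bound K R hK hR A C₁ a δ hA hC₁ ha2 hAb.2 hC₁b.2 k3))
end

section
/- For every ε > 0 there is a constant C_ε with the following property. Let R ≥ 2 and let a and a₁ be distinct positive integers with a ≤ R, a₁ ≤ R, such that every prime factor of a and every prime factor of a₁ is at least R^{1/320}. Then for every real Q ≥ 1, ∑_{Q < q ≤ 2Q} gcd(a², q)^{1/2} · gcd(a₁², q)^{1/2} · gcd(a − a₁, q)^{1/4} ≤ C_ε · R^ε · Q^{5/4}, where the sum is over integers q. -/
open scoped Pointwise in
lemma aux_card_divisors_mul (m n : ℕ) :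
    (m * n).divisors.card ≤ m.divisors.card * n.divisors.card := by
  rw [Nat.divisors_mul]
  exact Finset.card_mul_le

lemma aux_omega (y : ℝ) (hy : 0 ≤ y) (n : ℕ) : n ≠ 0 →
    (∀ p : ℕ, p.Prime → p ∣ n → y ≤ (p : ℝ)) →
    ∃ k : ℕ, n.divisors.card ≤ 2 ^ k ∧ y ^ k ≤ (n : ℝ) := by
  induction n using induction_on_primes with
  | zero => intro h; exact absurd rfl h
  | one => intro _ _; exact ⟨0, by simp, by simp⟩
  | prime_mul p a hp ih =>
    intro h0 h
    have ha : a ≠ 0 := by rintro rfl; simp at h0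
    obtain ⟨k, h1, h2⟩ := ih ha (fun q hq hd => h q hq (hd.mul_left p))
    refine ⟨k + 1, ?_, ?_⟩
    · calc _ ≤ _ := aux_card_divisors_mul p a
        _ ≤ 2 * 2 ^ k := by
          gcongr
          rw [Nat.Prime.divisors hp]
          exact Finset.card_le_two
        _ = _ := by ring
    · rw [pow_succ']
      push_cast
      have := h p hp (dvd_mul_right p a)
      gcongr

lemma aux_card (R : ℝ) (hR : 2 ≤ R) (a : ℕ) (ha : 1 ≤ a) (haR : (a : ℝ) ≤ R)
    (h : ∀ p : ℕ, p.Prime → p ∣ a → R ^ ((1 : ℝ) / 320) ≤ (p : ℝ)) :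
    (a ^ 2).divisors.card ≤ 2 ^ 640 := by
  obtain ⟨k, h1, h2⟩ := aux_omega _ (by positivity) a (by omega) h
  have hk : k ≤ 320 := by
    rw [← Real.rpow_natCast, ← Real.rpow_mul (by linarith)] at h2
    have h3 : R ^ ((1 : ℝ) / 320 * k) ≤ R ^ (1 : ℝ) := by
      rw [Real.rpow_one]; exact h2.trans haR
    rw [Real.rpow_le_rpow_left_iff (by linarith)] at h3
    have : (k : ℝ) ≤ 320 := by linarith
    exact_mod_cast this
  have h4 : a.divisors.card ≤ 2 ^ 320 := h1.trans (Nat.pow_le_pow_right (by norm_num) hk)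
  rw [pow_two]
  calc _ ≤ _ := aux_card_divisors_mul a a
    _ ≤ 2 ^ 320 * 2 ^ 320 := Nat.mul_le_mul h4 h4
    _ = _ := by rw [← pow_add]

lemma aux_sum (n N M : ℕ) (hn : n ≠ 0) :
    ∑ q ∈ Finset.Ioc M N, Nat.gcd n q ≤ n.divisors.card * N := by
  calc ∑ q ∈ Finset.Ioc M N, Nat.gcd n q
      ≤ ∑ q ∈ Finset.Ioc M N, ∑ d ∈ n.divisors, if d ∣ q then d else 0 := by
        refine Finset.sum_le_sum fun q _ => ?_
        have := Finset.single_le_sum (f := fun d => if d ∣ q then d else 0)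
          (fun _ _ => Nat.zero_le _)
          (Nat.mem_divisors.2 ⟨Nat.gcd_dvd_left n q, hn⟩)
        simpa [Nat.gcd_dvd_right] using this
    _ = ∑ d ∈ n.divisors, ∑ q ∈ Finset.Ioc M N, if d ∣ q then d else 0 := Finset.sum_comm
    _ ≤ ∑ d ∈ n.divisors, N := by
        refine Finset.sum_le_sum fun d _ => ?_
        calc _ ≤ ∑ q ∈ Finset.Ioc 0 N, if d ∣ q then d else 0 :=
              Finset.sum_le_sum_of_subset (Finset.Ioc_subset_Ioc_left (Nat.zero_le _))
          _ = (N / d) * d := by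
              rw [← Finset.sum_filter, Finset.sum_const, Nat.Ioc_filter_dvd_card_eq_div, smul_eq_mul]
          _ ≤ N := Nat.div_mul_le_self N d
    _ = _ := by simp

/-- For distinct `a, a₁ ≤ R` all of whose prime factors are at least `R^{1/320}`, the sum
`∑_{Q < q ≤ 2Q} gcd(a²,q)^{1/2} gcd(a₁²,q)^{1/2} gcd(a−a₁,q)^{1/4}` is `O_ε(R^ε Q^{5/4})`. -/
theorem gcd_sum_bound (ε : ℝ) (hε : 0 < ε) :
    ∃ Cε : ℝ, ∀ R : ℝ, 2 ≤ R → ∀ a a₁ : ℕ,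
      a ≠ a₁ → 1 ≤ a → 1 ≤ a₁ → (a : ℝ) ≤ R → (a₁ : ℝ) ≤ R →
      (∀ p : ℕ, p.Prime → p ∣ a → R ^ ((1 : ℝ) / 320) ≤ (p : ℝ)) →
      (∀ p : ℕ, p.Prime → p ∣ a₁ → R ^ ((1 : ℝ) / 320) ≤ (p : ℝ)) →
      ∀ Q : ℝ, 1 ≤ Q →
        (∑ q ∈ Finset.Ioc ⌊Q⌋₊ ⌊2 * Q⌋₊,
            ((Nat.gcd (a ^ 2) q : ℝ)) ^ ((1 : ℝ) / 2) *
              ((Nat.gcd (a₁ ^ 2) q : ℝ)) ^ ((1 : ℝ) / 2) *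
              ((Int.gcd ((a : ℤ) - (a₁ : ℤ)) (q : ℤ) : ℝ)) ^ ((1 : ℝ) / 4))
          ≤ Cε * R ^ ε * Q ^ ((5 : ℝ) / 4) := by
  obtain ⟨K, hK⟩ : ∃ K : ℕ, K = 2 ^ 640 := ⟨_, rfl⟩
  refine ⟨(K : ℝ) * 4, ?_⟩
  intro R hR a a₁ hne ha ha₁ haR ha₁R h h₁ Q hQ
  have hc := aux_card R hR a ha haR h
  rw [← hK] at hc
  have hc₁ := aux_card R hR a₁ ha₁ ha₁R h₁
  rw [← hK] at hc₁
  clear hK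
  have hN : (⌊2 * Q⌋₊ : ℝ) ≤ 2 * Q := Nat.floor_le (by linarith)
  have key : ∀ b : ℕ, 1 ≤ b → (b ^ 2).divisors.card ≤ K →
      ∑ q ∈ Finset.Ioc ⌊Q⌋₊ ⌊2 * Q⌋₊, (Nat.gcd (b ^ 2) q : ℝ) ≤ (K : ℝ) * (2 * Q) := by
    intro b hb hcb
    have h5 := (aux_sum (b ^ 2) ⌊2 * Q⌋₊ ⌊Q⌋₊ (by positivity)).trans (Nat.mul_le_mul_right _ hcb)
    have h6 : ∑ q ∈ Finset.Ioc ⌊Q⌋₊ ⌊2 * Q⌋₊, (Nat.gcd (b ^ 2) q : ℝ)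
        ≤ (K : ℝ) * (⌊2 * Q⌋₊ : ℝ) := by exact_mod_cast h5
    exact h6.trans (by gcongr)
  have k0 := key a ha hc
  have k1 := key a₁ ha₁ hc₁
  have hterm : ∀ q ∈ Finset.Ioc ⌊Q⌋₊ ⌊2 * Q⌋₊,
      ((Nat.gcd (a ^ 2) q : ℝ)) ^ ((1 : ℝ) / 2) * ((Nat.gcd (a₁ ^ 2) q : ℝ)) ^ ((1 : ℝ) / 2) *
        ((Int.gcd ((a : ℤ) - (a₁ : ℤ)) (q : ℤ) : ℝ)) ^ ((1 : ℝ) / 4) ≤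
      (1 / 2 * (Nat.gcd (a ^ 2) q : ℝ) + 1 / 2 * (Nat.gcd (a₁ ^ 2) q : ℝ)) *
        (2 * Q) ^ ((1 : ℝ) / 4) := by
    intro q hq
    rw [Finset.mem_Ioc] at hq
    have hq0 : 0 < q := by omega
    have hqQ : (q : ℝ) ≤ 2 * Q := le_trans (by exact_mod_cast hq.2) hN
    have hg : Int.gcd ((a : ℤ) - (a₁ : ℤ)) (q : ℤ) ≤ q := by
      have h7 := Int.gcd_dvd_right ((a : ℤ) - (a₁ : ℤ)) (q : ℤ)
      exact Nat.le_of_dvd hq0 (by exact_mod_cast h7)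
    have hg' : (Int.gcd ((a : ℤ) - (a₁ : ℤ)) (q : ℤ) : ℝ) ≤ 2 * Q :=
      le_trans (by exact_mod_cast hg) hqQ
    have hamgm := Real.geom_mean_le_arith_mean2_weighted (w₁ := 1 / 2) (w₂ := 1 / 2)
      (p₁ := (Nat.gcd (a ^ 2) q : ℝ)) (p₂ := (Nat.gcd (a₁ ^ 2) q : ℝ))
      (by norm_num) (by norm_num) (by positivity) (by positivity) (by norm_num)
    gcongr
  have hrp : (2 * Q) ^ ((1 : ℝ) / 4) ≤ 2 * Q ^ ((1 : ℝ) / 4) := by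
    rw [Real.mul_rpow (by norm_num) (by linarith)]
    gcongr
    calc (2 : ℝ) ^ ((1 : ℝ) / 4) ≤ 2 ^ (1 : ℝ) :=
          Real.rpow_le_rpow_of_exponent_le (by norm_num) (by norm_num)
      _ = 2 := Real.rpow_one 2
  have hQ54 : Q ^ ((5 : ℝ) / 4) = Q * Q ^ ((1 : ℝ) / 4) := by
    rw [← Real.rpow_one_add' (by linarith) (by norm_num)]
    norm_num
  have hRe : 1 ≤ R ^ ε := Real.one_le_rpow (by linarith) hε.le
  calc _ ≤ _ := Finset.sum_le_sum hterm
    _ = (1 / 2 * ∑ q ∈ Finset.Ioc ⌊Q⌋₊ ⌊2 * Q⌋₊, (Nat.gcd (a ^ 2) q : ℝ) +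
        1 / 2 * ∑ q ∈ Finset.Ioc ⌊Q⌋₊ ⌊2 * Q⌋₊, (Nat.gcd (a₁ ^ 2) q : ℝ)) *
        (2 * Q) ^ ((1 : ℝ) / 4) := by
      rw [← Finset.sum_mul, Finset.sum_add_distrib, Finset.mul_sum, Finset.mul_sum]
    _ ≤ ((K : ℝ) * (2 * Q)) * (2 * Q ^ ((1 : ℝ) / 4)) := by
      gcongr
      linarith
    _ = ((K : ℝ) * 4) * 1 * Q ^ ((5 : ℝ) / 4) := by rw [hQ54]; ring
    _ ≤ _ := by gcongr
end

section
/- Let p be an odd prime, r ≥ 1, q = p^r. Let A, B, C, a be integers with a² = AC − B² and p ∤ A, p ∤ a, and let m be an integer. Then the number of pairs (x, y) ∈ (ℤ/qℤ)² with A x² + 2B x y + C y² ≡ m (mod q) equals the number of pairs (u, v) ∈ (ℤ/qℤ)² with u² + v² ≡ A m (mod q); moreover the same equality holds for the counts restricted to pairs with p not dividing both coordinates (i.e. gcd(x, y, p) = 1 on the left and gcd(u, v, p) = 1 on the right). -/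
theorem bf_isUnit_cast (p r : ℕ) (hp : p.Prime) (A : ℤ) (h : ¬ (p : ℤ) ∣ A) :
    IsUnit (A : ZMod (p ^ r)) := by
  have h1 : IsCoprime ((p : ℤ) ^ r) A :=
    ((Nat.prime_iff_prime_int.mp hp).coprime_iff_not_dvd.mpr h).pow_left
  obtain ⟨u, v, huv⟩ := h1
  have h2 := congrArg (Int.cast : ℤ → ZMod (p ^ r)) huv
  have h3 : ((p : ZMod (p ^ r)) ^ r) = 0 := by
    have := ZMod.natCast_self (p ^ r)
    push_cast at this
    exact this
  push_cast at h2
  rw [h3, mul_zero, zero_add] at h2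
  exact IsUnit.of_mul_eq_one_right _ h2

theorem bf_isLocal (p r : ℕ) (hp : p.Prime) (hr : 1 ≤ r) : IsLocalRing (ZMod (p ^ r)) := by
  haveI : Fact (1 < p ^ r) := ⟨Nat.one_lt_pow (by omega) hp.one_lt⟩
  haveI : NeZero (p ^ r) := ⟨(pow_pos hp.pos r).ne'⟩
  have key : ∀ x : ZMod (p ^ r), x ∈ nonunits (ZMod (p ^ r)) ↔ p ∣ x.val := by
    intro x
    rw [mem_nonunits_iff, ← ZMod.natCast_zmod_val x, ZMod.isUnit_iff_coprime,
      Nat.coprime_pow_right_iff (by omega), Nat.coprime_comm, hp.coprime_iff_not_dvd,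
      ZMod.natCast_zmod_val, not_not]
  apply IsLocalRing.of_nonunits_add
  intro x y hx hy
  rw [key] at *
  rw [ZMod.val_add, Nat.dvd_mod_iff (dvd_pow_self p (by omega))]
  exact dvd_add hx hy

theorem bf_ncard {R : Type*} (e : R ≃ R) (S T : Set R) (h : ∀ x, x ∈ S ↔ e x ∈ T) :
    S.ncard = T.ncard := by
  have : e '' S = T := by
    ext y
    constructor
    · rintro ⟨x, hx, rfl⟩
      exact (h x).1 hx
    · intro hy
      exact ⟨e.symm y, (h _).2 (by simpa using hy), by simp⟩
  rw [← this, Set.ncard_image_of_injective _ e.injective]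

/-- For `q = p^r` an odd prime power and `f = A x² + 2B x y + C y²` with `p ∤ A`,
`AC − B² = a²`, `p ∤ a`, the number of solutions of `f(x,y) ≡ m (mod q)` equals the number
of solutions of `u² + v² ≡ A m (mod q)`, and likewise for solutions with at least one
coordinate a unit. -/
theorem binary_form_solution_count (p r : ℕ) (hp : p.Prime) (hodd : Odd p) (hr : 1 ≤ r)
    (A B C a m : ℤ) (ha : a ≠ 0) (hdisc : a ^ 2 = A * C - B ^ 2)
    (hpA : ¬ (p : ℤ) ∣ A) (hpa : ¬ (p : ℤ) ∣ a) :
    ({xy : ZMod (p ^ r) × ZMod (p ^ r) |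
        (A : ZMod (p ^ r)) * xy.1 ^ 2 + 2 * (B : ZMod (p ^ r)) * xy.1 * xy.2 +
          (C : ZMod (p ^ r)) * xy.2 ^ 2 = (m : ZMod (p ^ r))}.ncard
      = {uv : ZMod (p ^ r) × ZMod (p ^ r) |
          uv.1 ^ 2 + uv.2 ^ 2 = (A : ZMod (p ^ r)) * (m : ZMod (p ^ r))}.ncard) ∧
    ({xy : ZMod (p ^ r) × ZMod (p ^ r) |
        ((A : ZMod (p ^ r)) * xy.1 ^ 2 + 2 * (B : ZMod (p ^ r)) * xy.1 * xy.2 +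
          (C : ZMod (p ^ r)) * xy.2 ^ 2 = (m : ZMod (p ^ r))) ∧
        (IsUnit xy.1 ∨ IsUnit xy.2)}.ncard
      = {uv : ZMod (p ^ r) × ZMod (p ^ r) |
          (uv.1 ^ 2 + uv.2 ^ 2 = (A : ZMod (p ^ r)) * (m : ZMod (p ^ r))) ∧
          (IsUnit uv.1 ∨ IsUnit uv.2)}.ncard) := by
  haveI := bf_isLocal p r hp hr
  have hA := bf_isUnit_cast p r hp A hpA
  have haU := bf_isUnit_cast p r hp a hpa
  have hd := congrArg (Int.cast : ℤ → ZMod (p ^ r)) hdisc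
  push_cast at hd
  generalize (A : ZMod (p ^ r)) = A' at *
  generalize (B : ZMod (p ^ r)) = B' at *
  generalize (C : ZMod (p ^ r)) = C' at *
  generalize (a : ZMod (p ^ r)) = a' at *
  generalize (m : ZMod (p ^ r)) = m' at *
  obtain ⟨i, hi⟩ := hA.exists_left_inv
  obtain ⟨j, hj⟩ := haU.exists_left_inv
  let e : ZMod (p ^ r) × ZMod (p ^ r) ≃ ZMod (p ^ r) × ZMod (p ^ r) :=
    { toFun := fun z => (A' * z.1 + B' * z.2, a' * z.2)
      invFun := fun z => (i * (z.1 - B' * (j * z.2)), j * z.2)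
      left_inv := by
        rintro ⟨x, y⟩
        ext
        · linear_combination x * hi - i * B' * y * hj
        · linear_combination y * hj
      right_inv := by
        rintro ⟨x, y⟩
        ext
        · linear_combination (x - B' * (j * y)) * hi
        · linear_combination y * hj }
  have h1 : ∀ x y : ZMod (p ^ r), A' * x ^ 2 + 2 * B' * x * y + C' * y ^ 2 = m' ↔
      (A' * x + B' * y) ^ 2 + (a' * y) ^ 2 = A' * m' := by
    intro x y
    rw [← hA.mul_right_inj]
    constructor <;> intro h
    · linear_combination h + y ^ 2 * hd
    · linear_combination h - y ^ 2 * hd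
  have h2 : ∀ x y : ZMod (p ^ r), (IsUnit x ∨ IsUnit y) ↔
      (IsUnit (A' * x + B' * y) ∨ IsUnit (a' * y)) := by
    intro x y
    have hy : IsUnit (a' * y) ↔ IsUnit y := by simp [IsUnit.mul_iff, haU]
    rw [hy]
    constructor
    · rintro (h | h)
      · have h3 : IsUnit ((A' * x + B' * y) + (-B') * y) := by
          have : (A' * x + B' * y) + (-B') * y = A' * x := by ring
          rw [this]
          exact hA.mul h
        rcases IsLocalRing.isUnit_or_isUnit_of_isUnit_add h3 with h | h
        · exact Or.inl h
        · exact Or.inr (isUnit_of_mul_isUnit_right h)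
      · exact Or.inr h
    · rintro (h | h)
      · rcases IsLocalRing.isUnit_or_isUnit_of_isUnit_add h with h | h
        · exact Or.inl (isUnit_of_mul_isUnit_right h)
        · exact Or.inr (isUnit_of_mul_isUnit_right h)
      · exact Or.inr h
  exact ⟨bf_ncard e _ _ fun z => h1 z.1 z.2,
    bf_ncard e _ _ fun z => and_congr (h1 z.1 z.2) (h2 z.1 z.2)⟩
end
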